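/- arXiv:1811.08972 — 2 statements merged into one kernel-verified Lean document; each statement's English description precedes it below -/
import Mathlib

section
/- Let r ≥ 3 be a real number, let n ≥ 4, let T be a triangulation of the n-gon, let i ≥ 1, let Ĥ be a connected component of Ŝ_i(T) with root ρ, and let ŷρ be an edge of Ĥ from an in-neighbour y of ρ to ρ, dual to the chord {E,F} with E < F. Let ℓ be the number of nodes of in-degree zero of Ĥ lying in the component of Ĥ − ŷρ containing y. Then F − E > r^{i−1} · ℓ. -/
/-!
The in-degree-zero nodes counted by `ℓ` are pairwise interior-disjoint subintervals of `[E, F]`.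

A node of the component of `y` cannot be an outer face, because a boundary edge `{j, j + 1}` has
scale `0`; and a path that avoids `{E, F}` cannot leave the part of the polygon cut off by
`{E, F}`, because chords of `T` do not cross. So each such node is a triangle `(a, b, c)` with
`E ≤ a`, `c ≤ F`, and `{a, c}` of scale `i` (`reachable_inside`).

If the base `[a', c']` of one such triangle lies properly inside the base `[a, c]` of another, then
it lies inside `[a, b]` or `[b, c]`, since it crosses neither side. Scales are monotone under
inclusion, so that side has scale `i`, and `(a, b, c)` has positive in-degree
(`not_nested_of_inDegree_zero`). Hence the bases of the in-degree-zero nodes are disjoint, and each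
has length more than `r ^ (i - 1)`; adding up the lengths gives the bound.
-/

/-- `e` is a chord of the convex `n`-gon: a 2-element subset of `{0, …, n-1}`. -/
def IsChord (n : ℕ) (e : Finset ℕ) : Prop :=
  e.card = 2 ∧ ∀ x ∈ e, x < n

/-- `e` is a boundary edge of the `n`-gon, i.e. of the form `{i, (i+1) mod n}`. -/
def IsBoundaryEdge (n : ℕ) (e : Finset ℕ) : Prop :=
  ∃ i < n, e = ({i, (i + 1) % n} : Finset ℕ)

/-- `e` is a diagonal of the `n`-gon: a chord that is not a boundary edge. -/
def IsDiagonal (n : ℕ) (e : Finset ℕ) : Prop :=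
  IsChord n e ∧ ¬ IsBoundaryEdge n e

/-- Two chords `{a,b}` (`a<b`) and `{c,d}` (`c<d`) cross if `a<c<b<d` or `c<a<d<b`. -/
def Crosses (e f : Finset ℕ) : Prop :=
  ∃ a b c d : ℕ, a < b ∧ c < d ∧ e = ({a, b} : Finset ℕ) ∧ f = ({c, d} : Finset ℕ) ∧
    ((a < c ∧ c < b ∧ b < d) ∨ (c < a ∧ a < d ∧ d < b))

/-- `T` is a triangulation of the `n`-gon: the set of all `n` boundary edges together
with a maximal set of pairwise non-crossing diagonals. -/
def IsTriangulation (n : ℕ) (T : Finset (Finset ℕ)) : Prop :=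
  (∀ e ∈ T, IsChord n e) ∧
  (∀ i < n, ({i, (i + 1) % n} : Finset ℕ) ∈ T) ∧
  (∀ e ∈ T, ∀ f ∈ T, ¬ Crosses e f) ∧
  (∀ e, IsDiagonal n e → e ∉ T → ∃ f ∈ T, Crosses e f)

/-- The scale of the chord `{U, V}` with respect to the parameter `r`:
`σ_{UV} = ⌈log_r |U - V|⌉`. -/
noncomputable def scale (r : ℝ) (U V : ℕ) : ℤ :=
  ⌈Real.log |(U : ℝ) - (V : ℝ)| / Real.log r⌉

/-- `a b c` (with `a < b < c`) is a triangle of `T`: all three sides are chords of `T`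
(in a triangulation of a convex polygon they then bound a common face). -/
def IsTriangleOf (T : Finset (Finset ℕ)) (a b c : ℕ) : Prop :=
  a < b ∧ b < c ∧ ({a, b} : Finset ℕ) ∈ T ∧ ({b, c} : Finset ℕ) ∈ T ∧
    ({a, c} : Finset ℕ) ∈ T

/-- A face of (the plane drawing of) a triangulation of the `n`-gon: either a triangle,
recorded as an increasing triple of polygon vertices `Sum.inl (a, b, c)`, or the outer
face attached to the boundary edge `{i, (i+1) mod n}`, recorded as `Sum.inr i`. -/
abbrev Face : Type := (ℕ × ℕ × ℕ) ⊕ ℕ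

/-- The head of the oriented dual edge `ê` of the chord `e ∈ T`: the incident triangle
`UVW` (for `e = {U, V}`, `U < V`) whose third vertex `W` satisfies `W < U` or `W > V` if
it exists, and otherwise (which happens only for `e = {0, n-1}`) the outer face of `e`.
For a triangle `a < b < c` this means `e = {a, b}` or `e = {b, c}`. -/
def DualHead (n : ℕ) (T : Finset (Finset ℕ)) (e : Finset ℕ) (f : Face) : Prop :=
  (∃ a b c : ℕ, f = Sum.inl (a, b, c) ∧ IsTriangleOf T a b c ∧
    (e = ({a, b} : Finset ℕ) ∨ e = ({b, c} : Finset ℕ))) ∨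
  (f = Sum.inr (n - 1) ∧ e = ({0, n - 1} : Finset ℕ) ∧ e ∈ T)

/-- The tail of the oriented dual edge `ê` of the chord `e ∈ T`: for a triangle
`a < b < c` this means `e = {a, c}`; for the outer face of a boundary edge
`{i, i+1}` with `i < n-1` it means `e = {i, i+1}`. -/
def DualTail (n : ℕ) (T : Finset (Finset ℕ)) (e : Finset ℕ) (f : Face) : Prop :=
  (∃ a b c : ℕ, f = Sum.inl (a, b, c) ∧ IsTriangleOf T a b c ∧
    e = ({a, c} : Finset ℕ)) ∨
  (∃ i : ℕ, f = Sum.inr i ∧ i < n - 1 ∧ e = ({i, i + 1} : Finset ℕ) ∧ e ∈ T)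

/-- The dual edge `ê` of `e` is a left turn: its head is a triangle `UVW` with `W < U`,
i.e. `e = {b, c}` for a triangle `a < b < c` of `T`. -/
def LeftTurnEdge (T : Finset (Finset ℕ)) (e : Finset ℕ) : Prop :=
  ∃ a b c : ℕ, IsTriangleOf T a b c ∧ e = ({b, c} : Finset ℕ)

/-- The dual edge `ê` of `e` is a right turn: its head is a triangle `UVW` with `W > V`,
i.e. `e = {a, b}` for a triangle `a < b < c` of `T`. -/
def RightTurnEdge (T : Finset (Finset ℕ)) (e : Finset ℕ) : Prop :=
  ∃ a b c : ℕ, IsTriangleOf T a b c ∧ e = ({a, b} : Finset ℕ)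

/-- One oriented step in the dual subgraph `Ŝ`: from the tail to the head of the dual
edge of some `e ∈ S`. -/
def DualStep (n : ℕ) (T S : Finset (Finset ℕ)) (f f' : Face) : Prop :=
  ∃ e ∈ S, DualTail n T e f ∧ DualHead n T e f'

open Classical in
/-- `g_S(v)`: the number of left-turn edges on the path in `Ŝ` from `v` to the root of
its component (the edges of this path are exactly the `ê`, `e ∈ S`, whose tail is
reachable from `v` by oriented steps in `Ŝ`). -/
noncomputable def gCount (n : ℕ) (T S : Finset (Finset ℕ)) (v : Face) : ℕ :=
  (S.filter (fun e => LeftTurnEdge T e ∧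
    ∃ f : Face, DualTail n T e f ∧ Relation.ReflTransGen (DualStep n T S) v f)).card

open Classical in
/-- `d_S(v)`: the number of right-turn edges on the path in `Ŝ` from `v` to the root of
its component. -/
noncomputable def dCount (n : ℕ) (T S : Finset (Finset ℕ)) (v : Face) : ℕ :=
  (S.filter (fun e => RightTurnEdge T e ∧
    ∃ f : Face, DualTail n T e f ∧ Relation.ReflTransGen (DualStep n T S) v f)).card

/-- For a chord `e = {U, V}`, `chordGap e = |U - V|`. -/
def chordGap (e : Finset ℕ) : ℕ :=
  e.sup id - (e.sum id - e.sup id)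

/-- The scale `σ_e = ⌈log_r |U - V|⌉` of a chord `e = {U, V}`. -/
noncomputable def chordScale (r : ℝ) (e : Finset ℕ) : ℤ :=
  ⌈Real.log (chordGap e : ℝ) / Real.log r⌉

/-- `S_i(T) = {e ∈ T : σ_e = i}`, the chords of `T` of scale `i`. -/
noncomputable def scaleSubset (r : ℝ) (T : Finset (Finset ℕ)) (i : ℕ) : Finset (Finset ℕ) :=
  T.filter (fun e => chordScale r e = (i : ℤ))

/-- All potential faces of a triangulation of the `n`-gon (triples that are not
increasing triangles of `T` are junk nodes with no incident dual edges). -/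
def allFaces (n : ℕ) : Finset Face :=
  ((Finset.range n ×ˢ Finset.range n ×ˢ Finset.range n).image Sum.inl) ∪
    ((Finset.range n).image Sum.inr)

/-- `G(T) = Σ_{i=1}^{⌈log_r n⌉} Σ_{v ∈ V(T̂)} g_{S_i(T)}(v)`. -/
noncomputable def GCount (r : ℝ) (n : ℕ) (T : Finset (Finset ℕ)) : ℕ :=
  ∑ i ∈ Finset.Icc 1 ⌈Real.log (n : ℝ) / Real.log r⌉₊,
    ∑ v ∈ allFaces n, gCount n T (scaleSubset r T i) v

/-- `D(T) = Σ_{i=1}^{⌈log_r n⌉} Σ_{v ∈ V(T̂)} d_{S_i(T)}(v)`. -/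
noncomputable def DCount (r : ℝ) (n : ℕ) (T : Finset (Finset ℕ)) : ℕ :=
  ∑ i ∈ Finset.Icc 1 ⌈Real.log (n : ℝ) / Real.log r⌉₊,
    ∑ v ∈ allFaces n, dCount n T (scaleSubset r T i) v

/-- The dual subgraph `Ŝ` of the dual tree `T̂`, as an (undirected) simple graph on the
faces: `f` and `f'` are adjacent iff they are the two endpoints of the dual edge of some
chord `e ∈ S`. -/
def dualGraph (n : ℕ) (T S : Finset (Finset ℕ)) : SimpleGraph Face :=
  SimpleGraph.fromRel (fun f f' => ∃ e ∈ S, DualTail n T e f ∧ DualHead n T e f')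

open Classical in
/-- The degree of the node `v` in `Ŝ`: the number of chords of `S` whose dual edge is
incident to `v`. -/
noncomputable def hatDegree (n : ℕ) (T S : Finset (Finset ℕ)) (v : Face) : ℕ :=
  (S.filter (fun e => DualTail n T e v ∨ DualHead n T e v)).card

open Classical in
/-- The in-degree of the node `v` in `Ŝ`: the number of chords of `S` whose dual edge
has head `v`. -/
noncomputable def hatInDegree (n : ℕ) (T S : Finset (Finset ℕ)) (v : Face) : ℕ :=
  (S.filter (fun e => DualHead n T e v)).card

/-- A node of the component `Ĥ` of `Ŝ` containing `v₀` (with root `ρ`) that is kept when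
forming the reduced tree `H̃`: a node of `Ĥ` whose degree is not `2`, or the root `ρ`
itself (if `ρ` has degree `2`, a new node is attached to it before suppression, so it is
kept). -/
def ReducedKept (n : ℕ) (T S : Finset (Finset ℕ)) (v₀ ρ u : Face) : Prop :=
  (dualGraph n T S).Reachable v₀ u ∧ (hatDegree n T S u ≠ 2 ∨ u = ρ)

/-- The adjacency relation of the reduced tree `H̃` of the component `Ĥ` of `Ŝ`
containing `v₀`, with root `ρ`.  Its nodes are the kept nodes of `Ĥ` together with
(if `ρ` has exactly two in-neighbours, i.e. degree `2`) one extra node `Sum.inr ()`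
attached to `ρ`; two kept nodes are adjacent iff they are joined in `Ĥ` by a path all
of whose internal nodes are suppressed (degree exactly `2`, and not `ρ`). -/
def ReducedAdj (n : ℕ) (T S : Finset (Finset ℕ)) (v₀ ρ : Face)
    (x y : Face ⊕ Unit) : Prop :=
  (∃ u w : Face, x = Sum.inl u ∧ y = Sum.inl w ∧ u ≠ w ∧
    ReducedKept n T S v₀ ρ u ∧ ReducedKept n T S v₀ ρ w ∧
    ∃ p : (dualGraph n T S).Walk u w, p.IsPath ∧
      ∀ v ∈ p.support, v = u ∨ v = w ∨ (hatDegree n T S v = 2 ∧ v ≠ ρ)) ∨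
  (hatDegree n T S ρ = 2 ∧
    ((x = Sum.inl ρ ∧ (∃ u : Unit, y = Sum.inr u)) ∨
     (y = Sum.inl ρ ∧ (∃ u : Unit, x = Sum.inr u))))

/-- A leaf of the reduced tree `H̃`: a node with exactly one neighbour. -/
def IsReducedLeaf (n : ℕ) (T S : Finset (Finset ℕ)) (v₀ ρ : Face)
    (x : Face ⊕ Unit) : Prop :=
  ∃! y : Face ⊕ Unit, ReducedAdj n T S v₀ ρ x y

/-! ### Chords, scales and crossings -/

lemma pair_inj {a b c d : ℕ} (hab : a < b) (hcd : c < d)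
    (h : ({a, b} : Finset ℕ) = {c, d}) : a = c ∧ b = d := by
  have h1 : a ∈ ({c, d} : Finset ℕ) := h ▸ by simp
  have h2 : b ∈ ({c, d} : Finset ℕ) := h ▸ by simp
  have h3 : c ∈ ({a, b} : Finset ℕ) := h ▸ by simp
  simp only [Finset.mem_insert, Finset.mem_singleton] at h1 h2 h3
  omega

lemma chordGap_pair {a c : ℕ} (h : a < c) : chordGap ({a, c} : Finset ℕ) = c - a := by
  have hs : ({a, c} : Finset ℕ).sup id = c := by
    simp [Finset.sup_insert, h.le]
  have ht : ({a, c} : Finset ℕ).sum id = a + c := by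
    simp [Finset.sum_pair h.ne]
  rw [chordGap, hs, ht]
  omega

/-- A chord has scale `i ≥ 1` exactly when its length lies in `(r ^ (i - 1), r ^ i]`. -/
lemma mem_scaleSubset_iff {r : ℝ} (hr : 3 ≤ r) {T : Finset (Finset ℕ)} {i : ℕ} (hi : 1 ≤ i)
    {a c : ℕ} (h : a < c) :
    ({a, c} : Finset ℕ) ∈ scaleSubset r T i ↔
      ({a, c} : Finset ℕ) ∈ T ∧ r ^ (i - 1) < ((c - a : ℕ) : ℝ) ∧ ((c - a : ℕ) : ℝ) ≤ r ^ i := by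
  have hlog : 0 < Real.log r := Real.log_pos (by linarith)
  have hr0 : 0 < r := by linarith
  have hg : (0 : ℝ) < ((c - a : ℕ) : ℝ) := by
    exact_mod_cast Nat.sub_pos_of_lt h
  obtain ⟨j, rfl⟩ : ∃ j, i = j + 1 := ⟨i - 1, by omega⟩
  rw [scaleSubset, Finset.mem_filter, chordScale, chordGap_pair h, Int.ceil_eq_iff,
    lt_div_iff₀ hlog, div_le_iff₀ hlog]
  refine and_congr_right fun _ => and_congr ?_ ?_
  · rw [Nat.add_sub_cancel, ← Real.log_lt_log_iff (pow_pos hr0 _) hg, Real.log_pow]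
    push_cast
    rw [add_sub_cancel_right]
  · rw [← Real.log_le_log_iff hg (pow_pos hr0 _), Real.log_pow]
    push_cast
    rfl

/-- A chord of `T` whose interval lies between those of two chords of scale `i` has scale `i`. -/
lemma mem_scaleSubset_of_between {r : ℝ} (hr : 3 ≤ r) {T : Finset (Finset ℕ)} {i : ℕ}
    (hi : 1 ≤ i) {a c p q E F : ℕ} (hac : a < c) (hpa : p ≤ a) (hcq : c ≤ q) (hEp : E ≤ p)
    (hqF : q ≤ F) (h1 : ({a, c} : Finset ℕ) ∈ scaleSubset r T i)
    (h2 : ({E, F} : Finset ℕ) ∈ scaleSubset r T i) (hT : ({p, q} : Finset ℕ) ∈ T) :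
    ({p, q} : Finset ℕ) ∈ scaleSubset r T i := by
  rw [mem_scaleSubset_iff hr hi (by omega)] at h1 h2 ⊢
  refine ⟨hT, h1.2.1.trans_le ?_, le_trans ?_ h2.2.2⟩
  · exact_mod_cast (by omega : c - a ≤ q - p)
  · exact_mod_cast (by omega : q - p ≤ F - E)

lemma no_cross {n : ℕ} {T : Finset (Finset ℕ)} (hT : IsTriangulation n T) {a b c d : ℕ}
    (h1 : ({a, b} : Finset ℕ) ∈ T) (h2 : ({c, d} : Finset ℕ) ∈ T)
    (hac : a < c) (hcb : c < b) (hbd : b < d) : False :=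
  hT.2.2.1 _ h1 _ h2 ⟨a, b, c, d, by omega, by omega, rfl, rfl, Or.inl ⟨hac, hcb, hbd⟩⟩

/-! ### The component of `y` -/

/-- `w` is a triangle `a < b < c` of `T` whose base `{a, c}` has scale `i` and lies in
`[E, F]`. -/
def InsideTriangle (r : ℝ) (T : Finset (Finset ℕ)) (i E F : ℕ) (w : Face) : Prop :=
  ∃ a b c : ℕ, w = Sum.inl (a, b, c) ∧ IsTriangleOf T a b c ∧
    ({a, c} : Finset ℕ) ∈ scaleSubset r T i ∧ E ≤ a ∧ c ≤ F

/-- The tail of the dual edge of a chord of scale `i ≥ 1` is never an outer face. -/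
lemma tail_inside {r : ℝ} (hr : 3 ≤ r) {n : ℕ} {T : Finset (Finset ℕ)} {i : ℕ} (hi : 1 ≤ i)
    {E F p q : ℕ} (hpq : p < q) (hE : E ≤ p) (hF : q ≤ F) {w : Face}
    (he : ({p, q} : Finset ℕ) ∈ scaleSubset r T i) (ht : DualTail n T {p, q} w) :
    InsideTriangle r T i E F w := by
  rcases ht with ⟨a, b, c, rfl, htri, heq⟩ | ⟨j, rfl, -, heq, -⟩
  · have hab := htri.1
    have hbc := htri.2.1
    obtain ⟨rfl, rfl⟩ := pair_inj hpq (by omega) heq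
    exact ⟨_, _, _, rfl, htri, he, hE, hF⟩
  · exfalso
    obtain ⟨rfl, rfl⟩ := pair_inj hpq (by omega) heq
    rw [mem_scaleSubset_iff hr hi hpq] at he
    have h1 := he.2.1
    have h2 : (1 : ℝ) ≤ r ^ (i - 1) := one_le_pow₀ (by linarith)
    rw [Nat.add_sub_cancel_left, Nat.cast_one] at h1
    linarith

/-- Walking against the orientation passes to a subinterval of the current base. -/
lemma inside_of_step_back {r : ℝ} (hr : 3 ≤ r) {n : ℕ} {T : Finset (Finset ℕ)} {i : ℕ}
    (hi : 1 ≤ i) {E F : ℕ} {e : Finset ℕ} {w w' : Face} (hw : InsideTriangle r T i E F w)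
    (he : e ∈ scaleSubset r T i) (ht : DualTail n T e w') (hh : DualHead n T e w) :
    InsideTriangle r T i E F w' := by
  obtain ⟨a, b, c, rfl, htri, hS, hE, hF⟩ := hw
  have hab := htri.1
  have hbc := htri.2.1
  rcases hh with ⟨a', b', c', heq, -, h⟩ | ⟨heq, -⟩
  · simp only [Sum.inl.injEq, Prod.mk.injEq] at heq
    obtain ⟨rfl, rfl, rfl⟩ := heq
    rcases h with rfl | rfl
    · exact tail_inside hr hi hab hE (by omega) he ht
    · exact tail_inside hr hi hbc (by omega) hF he ht
  · cases heq

/-- Walking along the orientation through a chord other than `{E, F}` stays inside `[E, F]`,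
since otherwise a side of the next triangle would cross `{E, F}`. -/
lemma inside_of_step_forward {r : ℝ} (hr : 3 ≤ r) {n : ℕ} {T : Finset (Finset ℕ)}
    (hT : IsTriangulation n T) {i : ℕ} (hi : 1 ≤ i) {E F : ℕ} (hEF : E < F)
    (hEFS : ({E, F} : Finset ℕ) ∈ scaleSubset r T i) {e : Finset ℕ} {w w' : Face}
    (hw : InsideTriangle r T i E F w) (hne : e ≠ {E, F})
    (ht : DualTail n T e w) (hh : DualHead n T e w') :
    InsideTriangle r T i E F w' := by
  obtain ⟨a, b, c, rfl, htri, hS, hE, hF⟩ := hw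
  have hab := htri.1
  have hbc := htri.2.1
  have hac : a < c := by omega
  have hEFT : ({E, F} : Finset ℕ) ∈ T := (Finset.mem_filter.1 hEFS).1
  have hFn : F < n := (hT.1 _ hEFT).2 F (by simp)
  rcases ht with ⟨a', b', c', heq, -, rfl⟩ | ⟨j, heq, -⟩
  swap
  · cases heq
  simp only [Sum.inl.injEq, Prod.mk.injEq] at heq
  obtain ⟨rfl, rfl, rfl⟩ := heq
  have hne' : ¬ (a = E ∧ c = F) := by
    rintro ⟨rfl, rfl⟩
    exact hne rfl
  rcases hh with ⟨p, q, s, rfl, htri', h⟩ | ⟨rfl, heq, -⟩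
  · have hpq := htri'.1
    have hqs := htri'.2.1
    have hpqT := htri'.2.2.1
    have hqsT := htri'.2.2.2.1
    have hpsT := htri'.2.2.2.2
    rcases h with h | h
    · obtain ⟨rfl, rfl⟩ := pair_inj hac hpq h
      have hsF : s ≤ F := by
        by_contra! hlt
        rcases hF.lt_or_eq with h1 | rfl
        · exact no_cross hT hEFT hqsT (by omega) h1 hlt
        · exact no_cross hT hEFT hpsT (by omega) hpq hlt
      exact ⟨_, _, _, rfl, htri', mem_scaleSubset_of_between hr hi hac le_rfl hqs.le hE hsF
        hS hEFS hpsT, hE, hsF⟩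
    · obtain ⟨rfl, rfl⟩ := pair_inj hac hqs h
      have hpE : E ≤ p := by
        by_contra! hlt
        rcases hE.lt_or_eq with h1 | rfl
        · exact no_cross hT hpqT hEFT hlt h1 (by omega)
        · exact no_cross hT hpsT hEFT hlt hqs (by omega)
      exact ⟨_, _, _, rfl, htri', mem_scaleSubset_of_between hr hi hac hpq.le le_rfl hpE hF
        hS hEFS hpsT, hpE, hF⟩
  · exfalso
    obtain ⟨h1, h2⟩ := pair_inj hac (by omega) heq
    omega

lemma reachable_inside {r : ℝ} (hr : 3 ≤ r) {n : ℕ} {T : Finset (Finset ℕ)}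
    (hT : IsTriangulation n T) {i : ℕ} (hi : 1 ≤ i) {E F : ℕ} (hEF : E < F)
    (hEFS : ({E, F} : Finset ℕ) ∈ scaleSubset r T i) {y w : Face}
    (hy : DualTail n T {E, F} y)
    (h : (dualGraph n T ((scaleSubset r T i).erase {E, F})).Reachable y w) :
    InsideTriangle r T i E F w := by
  rw [SimpleGraph.reachable_iff_reflTransGen] at h
  induction h with
  | refl => exact tail_inside hr hi hEF le_rfl le_rfl hEFS hy
  | tail _ hadj ih =>
    rw [dualGraph, SimpleGraph.fromRel_adj] at hadj
    rcases hadj.2 with ⟨e, he, ht, hh⟩ | ⟨e, he, ht, hh⟩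
    · exact inside_of_step_forward hr hT hi hEF hEFS ih (Finset.ne_of_mem_erase he) ht hh
    · exact inside_of_step_back hr hi ih (Finset.mem_of_mem_erase he) ht hh

/-! ### Disjointness of the in-degree-zero triangles -/

lemma inDegree_pos {n : ℕ} {T S : Finset (Finset ℕ)} {e : Finset ℕ} {w : Face} (he : e ∈ S)
    (hh : DualHead n T e w) : hatInDegree n T S w ≠ 0 := by
  classical
  exact Finset.card_ne_zero_of_mem (Finset.mem_filter.2 ⟨he, hh⟩)

/-- The base of an in-degree-zero triangle contains the base of no other triangle of
scale `i`. -/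
lemma not_nested_of_inDegree_zero {r : ℝ} (hr : 3 ≤ r) {n : ℕ} {T : Finset (Finset ℕ)}
    (hT : IsTriangulation n T) {i : ℕ} (hi : 1 ≤ i) {a b c a' b' c' : ℕ}
    (htri : IsTriangleOf T a b c) (htri' : IsTriangleOf T a' b' c')
    (hS : ({a, c} : Finset ℕ) ∈ scaleSubset r T i)
    (hS' : ({a', c'} : Finset ℕ) ∈ scaleSubset r T i)
    (hdeg : hatInDegree n T (scaleSubset r T i) (Sum.inl (a, b, c)) = 0)
    (ha : a ≤ a') (hc : c' ≤ c) : a = a' ∧ b = b' ∧ c = c' := by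
  have htri0 := htri
  obtain ⟨hab, hbc, habT, hbcT, -⟩ := htri
  obtain ⟨hab', hbc', habT', hbcT', hacT'⟩ := htri'
  by_cases heq : a = a' ∧ c = c'
  · obtain ⟨rfl, rfl⟩ := heq
    refine ⟨rfl, ?_, rfl⟩
    -- Two triangles of `T` with the same base and different apexes would have crossing sides.
    rcases lt_trichotomy b b' with h | h | h
    · exact (no_cross hT habT' hbcT hab h hbc').elim
    · exact h
    · exact (no_cross hT habT hbcT' hab' h hbc).elim
  · exfalso
    have hside : b ≤ a' ∨ c' ≤ b := by
      by_contra! h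
      by_cases h1 : a < a'
      · exact no_cross hT habT hacT' h1 h.1 h.2
      · exact no_cross hT hacT' hbcT h.1 h.2 (by omega)
    rcases hside with h | h
    · exact inDegree_pos (mem_scaleSubset_of_between hr hi (by omega) h hc hab.le le_rfl hS' hS
        hbcT) (Or.inl ⟨a, b, c, rfl, htri0, Or.inr rfl⟩) hdeg
    · exact inDegree_pos (mem_scaleSubset_of_between hr hi (by omega) ha h le_rfl hbc.le hS' hS
        habT) (Or.inl ⟨a, b, c, rfl, htri0, Or.inl rfl⟩) hdeg

/-- The half-open interval `[a, c)` under a triangle `(a, b, c)`; empty for outer faces. -/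
def baseInterval : Face → Finset ℕ
  | Sum.inl (a, _, c) => Finset.Ico a c
  | Sum.inr _ => ∅

lemma baseInterval_disjoint {r : ℝ} (hr : 3 ≤ r) {n : ℕ} {T : Finset (Finset ℕ)}
    (hT : IsTriangulation n T) {i : ℕ} (hi : 1 ≤ i) {E F : ℕ} {w w' : Face}
    (hw : InsideTriangle r T i E F w) (hw' : InsideTriangle r T i E F w')
    (hdeg : hatInDegree n T (scaleSubset r T i) w = 0)
    (hdeg' : hatInDegree n T (scaleSubset r T i) w' = 0) (hne : w ≠ w') :
    Disjoint (baseInterval w) (baseInterval w') := by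
  obtain ⟨a, b, c, rfl, htri, hS, -, -⟩ := hw
  obtain ⟨a', b', c', rfl, htri', hS', -, -⟩ := hw'
  rw [Finset.disjoint_left]
  intro x hx hx'
  simp only [baseInterval, Finset.mem_Ico] at hx hx'
  have hacT := htri.2.2.2.2
  have hacT' := htri'.2.2.2.2
  have hnest : (a ≤ a' ∧ c' ≤ c) ∨ (a' ≤ a ∧ c ≤ c') := by
    by_contra! h
    by_cases h1 : a ≤ a'
    · have h2 := h.1 h1
      by_cases h3 : a = a'
      · have := h.2 h3.ge
        omega
      · exact no_cross hT hacT hacT' (by omega) (by omega) h2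
    · have := h.2 (by omega)
      exact no_cross hT hacT' hacT (by omega) (by omega) this
  apply hne
  rcases hnest with h | h
  · obtain ⟨rfl, rfl, rfl⟩ :=
      not_nested_of_inDegree_zero hr hT hi htri htri' hS hS' hdeg h.1 h.2
    rfl
  · obtain ⟨rfl, rfl, rfl⟩ :=
      not_nested_of_inDegree_zero hr hT hi htri' htri hS' hS hdeg' h.1 h.2
    rfl

/-- For a component of `Ŝᵢ(T)` with root `ρ` and an edge `ŷρ` into `ρ`, dual to the
chord `{E, F}` (`E < F`): if `ℓ` is the number of in-degree-zero nodes of the component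
of `Ĥ - ŷρ` containing `y`, then `F - E > r^(i-1) · ℓ`. -/
theorem root_edge_span_gt
    (r : ℝ) (hr : 3 ≤ r) (n : ℕ) (hn : 4 ≤ n)
    (T : Finset (Finset ℕ)) (hT : IsTriangulation n T)
    (i : ℕ) (hi : 1 ≤ i) (y ρ : Face) (E F : ℕ) (hEF : E < F)
    (he : ({E, F} : Finset ℕ) ∈ scaleSubset r T i)
    (htail : DualTail n T ({E, F} : Finset ℕ) y)
    (hhead : DualHead n T ({E, F} : Finset ℕ) ρ)
    (hρroot : ¬ ∃ e ∈ scaleSubset r T i, DualTail n T e ρ) :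
    r ^ (i - 1) *
        ({w : Face |
            (dualGraph n T ((scaleSubset r T i).erase ({E, F} : Finset ℕ))).Reachable y w ∧
            hatInDegree n T (scaleSubset r T i) w = 0}.ncard : ℝ) <
      (F : ℝ) - (E : ℝ) := by
  have hpos : (0 : ℝ) < (F : ℝ) - (E : ℝ) := sub_pos.2 (by exact_mod_cast hEF)
  set L : Set Face := {w : Face |
    (dualGraph n T ((scaleSubset r T i).erase ({E, F} : Finset ℕ))).Reachable y w ∧
      hatInDegree n T (scaleSubset r T i) w = 0} with hL
  -- If `L` is empty, or infinite with junk `ncard`, the left side is `0`.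
  rcases Nat.eq_zero_or_pos L.ncard with h0 | h0
  · rw [h0]
    simpa using hpos
  have hfin : L.Finite := Set.finite_of_ncard_pos h0
  rw [Set.ncard_eq_toFinset_card L hfin] at h0 ⊢
  have hin : ∀ w ∈ hfin.toFinset, InsideTriangle r T i E F w := fun w hw =>
    reachable_inside hr hT hi hEF he htail ((hfin.mem_toFinset.1 hw).1)
  have hdisj : ∀ w ∈ hfin.toFinset, ∀ w' ∈ hfin.toFinset, w ≠ w' →
      Disjoint (baseInterval w) (baseInterval w') := fun w hw w' hw' hne =>
    baseInterval_disjoint hr hT hi (hin w hw) (hin w' hw') (hfin.mem_toFinset.1 hw).2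
      (hfin.mem_toFinset.1 hw').2 hne
  have hsub : hfin.toFinset.biUnion baseInterval ⊆ Finset.Ico E F := by
    refine Finset.biUnion_subset.2 fun w hw => ?_
    obtain ⟨a, b, c, rfl, -, -, hE, hF⟩ := hin w hw
    exact Finset.Ico_subset_Ico hE hF
  have hle : ∑ w ∈ hfin.toFinset, (baseInterval w).card ≤ F - E := by
    rw [← Finset.card_biUnion hdisj, ← Nat.card_Ico]
    exact Finset.card_le_card hsub
  have hbig : ∀ w ∈ hfin.toFinset, r ^ (i - 1) < ((baseInterval w).card : ℝ) := by
    intro w hw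
    obtain ⟨a, b, c, rfl, htri, hS, -, -⟩ := hin w hw
    rw [mem_scaleSubset_iff hr hi (htri.1.trans htri.2.1)] at hS
    simpa only [baseInterval, Nat.card_Ico] using hS.2.1
  calc r ^ (i - 1) * (hfin.toFinset.card : ℝ)
      = ∑ w ∈ hfin.toFinset, r ^ (i - 1) := by
        rw [Finset.sum_const, nsmul_eq_mul, mul_comm]
    _ < ∑ w ∈ hfin.toFinset, ((baseInterval w).card : ℝ) :=
        Finset.sum_lt_sum_of_nonempty (Finset.card_pos.1 h0) hbig
    _ ≤ ((F - E : ℕ) : ℝ) := by exact_mod_cast hle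
    _ = (F : ℝ) - (E : ℝ) := Nat.cast_sub hEF.le
end

section
/- For every integer n ≥ 4, every triangulation T of the n-gon, and every diagonal e ∈ T, there is exactly one triangulation T' of the n-gon with e ∉ T' and T \ {e} ⊆ T'; that is, each diagonal of a triangulation can be flipped in exactly one way. -/
/-! ### Crossing chords with unordered endpoints -/

/-- The chords `{a, b}` and `{c, d}` separate each other: one of `c, d` lies strictly between `a`
and `b`, the other strictly outside. The endpoints of each chord may be given in either order. -/
def Separates (a b c d : ℕ) : Prop :=
  (min a b < c ∧ c < max a b ∧ (d < min a b ∨ max a b < d)) ∨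
  (min a b < d ∧ d < max a b ∧ (c < min a b ∨ max a b < c))

theorem Separates.symm {a b c d : ℕ} (h : Separates a b c d) : Separates c d a b := by
  unfold Separates at *; omega

theorem pair_eq_pair {a b c d : ℕ} (h : ({a, b} : Finset ℕ) = {c, d}) :
    (a = c ∧ b = d) ∨ (a = d ∧ b = c) := by
  have h1 : a ∈ ({c, d} : Finset ℕ) := h ▸ by simp
  have h2 : b ∈ ({c, d} : Finset ℕ) := h ▸ by simp
  have h3 : c ∈ ({a, b} : Finset ℕ) := h ▸ by simp
  have h4 : d ∈ ({a, b} : Finset ℕ) := h ▸ by simp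
  simp only [Finset.mem_insert, Finset.mem_singleton] at h1 h2 h3 h4
  omega

theorem crosses_pair {a b c d : ℕ} :
    Crosses ({a, b} : Finset ℕ) {c, d} ↔ Separates a b c d := by
  constructor
  · rintro ⟨a', b', c', d', hab, hcd, h1, h2, h⟩
    have h1 := pair_eq_pair h1
    have h2 := pair_eq_pair h2
    unfold Separates
    omega
  · intro h
    refine ⟨min a b, max a b, min c d, max c d, ?_, ?_, ?_, ?_, ?_⟩
    · unfold Separates at h; omega
    · unfold Separates at h; omega
    · rcases le_total a b with h' | h' <;> simp [h', Finset.pair_comm]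
    · rcases le_total c d with h' | h' <;> simp [h', Finset.pair_comm]
    · unfold Separates at h; omega

theorem Crosses.symm {e f : Finset ℕ} (h : Crosses e f) : Crosses f e := by
  obtain ⟨a, b, c, d, hab, hcd, rfl, rfl, h⟩ := h
  exact ⟨c, d, a, b, hcd, hab, rfl, rfl, by omega⟩

theorem IsChord.exists_lt {n : ℕ} {e : Finset ℕ} (h : IsChord n e) :
    ∃ a b, a < b ∧ b < n ∧ e = {a, b} := by
  obtain ⟨a, b, hab, rfl⟩ := Finset.card_eq_two.1 h.1
  have ha : a < n := h.2 a (by simp)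
  have hb : b < n := h.2 b (by simp)
  rcases lt_or_gt_of_ne hab with h' | h'
  · exact ⟨a, b, h', hb, rfl⟩
  · exact ⟨b, a, h', ha, Finset.pair_comm a b⟩

theorem isChord_pair {n a b : ℕ} (hab : a ≠ b) (ha : a < n) (hb : b < n) :
    IsChord n {a, b} :=
  ⟨Finset.card_pair hab, by simp [ha, hb]⟩

theorem separates_swap_left {a b c d : ℕ} : Separates a b c d ↔ Separates b a c d := by
  unfold Separates; omega

theorem separates_swap_right {a b c d : ℕ} : Separates a b c d ↔ Separates a b d c := by
  unfold Separates; omega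

/-- The instance of `eq_of_separates` in which `x` and `c` are the endpoints between `p` and `q`;
the vertices inside and those outside the interval are then matched separately. -/
theorem eq_and_eq_of_between {p q x y c d : ℕ} (hpx : p < x) (hxq : x < q)
    (hy : y < p ∨ q < y) (hpc : p < c) (hcq : c < q) (hd : d < p ∨ q < d)
    (h1 : ¬ Separates p x c d) (h2 : ¬ Separates q x c d)
    (h3 : ¬ Separates p y c d) (h4 : ¬ Separates q y c d) : c = x ∧ d = y := by
  have hcx : c = x := by
    clear h3 h4 hy
    unfold Separates at h1 h2
    omega
  refine ⟨hcx, ?_⟩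
  clear h1 h2
  unfold Separates at h3 h4
  omega

/-- A chord crossing one diagonal `{p, q}` of the quadrilateral `p x q y` but none of its sides
is the other diagonal `{x, y}`. -/
theorem eq_of_separates {p q x y c d : ℕ} (h : Separates p q x y) (hc : Separates p q c d)
    (h1 : ¬ Separates p x c d) (h2 : ¬ Separates q x c d)
    (h3 : ¬ Separates p y c d) (h4 : ¬ Separates q y c d) :
    ({c, d} : Finset ℕ) = {x, y} := by
  wlog hpq : p ≤ q generalizing p q
  · exact this (separates_swap_left.1 h) (separates_swap_left.1 hc) h2 h1 h4 h3 (by omega)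
  wlog hx : p < x ∧ x < q generalizing x y
  · rw [Finset.pair_comm x y]
    refine this (separates_swap_right.1 h) h3 h4 h1 h2 ?_
    unfold Separates at h
    omega
  wlog hcpq : p < c ∧ c < q generalizing c d
  · rw [Finset.pair_comm c d]
    refine this (separates_swap_right.1 hc) ?_ ?_ ?_ ?_ ?_
    iterate 4 rwa [separates_swap_right]
    unfold Separates at hc
    omega
  have hy : y < p ∨ q < y := by unfold Separates at h; omega
  have hd : d < p ∨ q < d := by unfold Separates at hc; omega
  obtain ⟨rfl, rfl⟩ := eq_and_eq_of_between hx.1 hx.2 hy hcpq.1 hcpq.2 hd h1 h2 h3 h4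
  rfl

/-! ### The two triangles adjacent to a diagonal -/

section Triangulation

variable {n : ℕ} {T : Finset (Finset ℕ)}

theorem IsTriangulation.succ_mem (hT : IsTriangulation n T) {a : ℕ} (ha : a + 1 < n) :
    ({a, a + 1} : Finset ℕ) ∈ T := by
  have := hT.2.1 a (by omega)
  rwa [Nat.mod_eq_of_lt ha] at this

theorem IsTriangulation.not_separates (hT : IsTriangulation n T) {a b c d : ℕ}
    (h1 : ({a, b} : Finset ℕ) ∈ T) (h2 : ({c, d} : Finset ℕ) ∈ T) : ¬ Separates a b c d :=
  fun h => hT.2.2.1 _ h1 _ h2 (crosses_pair.2 h)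

/-- Maximality, for arbitrary chords: boundary edges belong to every triangulation. -/
theorem IsTriangulation.mem_of_not_crosses (hT : IsTriangulation n T) {e : Finset ℕ}
    (he : IsChord n e) (h : ∀ f ∈ T, ¬ Crosses e f) : e ∈ T := by
  by_contra hn
  by_cases hb : IsBoundaryEdge n e
  · obtain ⟨i, hi, rfl⟩ := hb
    exact hn (hT.2.1 i hi)
  · obtain ⟨f, hf, hc⟩ := hT.2.2.2 e ⟨he, hb⟩ hn
    exact h f hf hc

theorem IsTriangulation.pair_mem (hT : IsTriangulation n T) {a b : ℕ}
    (hab : a ≠ b) (ha : a < n) (hb : b < n)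
    (h : ∀ c d, c < d → ({c, d} : Finset ℕ) ∈ T → ¬ Separates a b c d) :
    ({a, b} : Finset ℕ) ∈ T := by
  refine hT.mem_of_not_crosses (isChord_pair hab ha hb) fun f hf hc => ?_
  obtain ⟨c, d, hcd, -, rfl⟩ := (hT.1 f hf).exists_lt
  exact h c d hcd hf (crosses_pair.1 hc)

theorem exists_max_of_lt {P : ℕ → Prop} {N : ℕ} (h : ∃ x, P x) (hN : ∀ x, P x → x < N) :
    ∃ x, P x ∧ ∀ z, P z → z ≤ x := by
  classical
  obtain ⟨w, hw⟩ := h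
  have hwN := (hN w hw).le
  exact ⟨Nat.findGreatest P N, Nat.findGreatest_spec hwN hw,
    fun z hz => Nat.le_findGreatest (hN z hz).le hz⟩

/-- The triangle adjacent to `{p, q}` on the side of the vertices between `p` and `q`. -/
theorem exists_inner_apex (hT : IsTriangulation n T) {p q : ℕ} (hpq : p + 1 < q) (hq : q < n)
    (h : ({p, q} : Finset ℕ) ∈ T) :
    ∃ x, p < x ∧ x < q ∧ ({p, x} : Finset ℕ) ∈ T ∧ ({q, x} : Finset ℕ) ∈ T := by
  obtain ⟨x, ⟨hpx, hxq, hx⟩, hmax⟩ := exists_max_of_lt (N := q)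
    (P := fun x => p < x ∧ x < q ∧ ({p, x} : Finset ℕ) ∈ T)
    ⟨p + 1, by omega, hpq, hT.succ_mem (by omega)⟩ (fun x hx => hx.2.1)
  refine ⟨x, hpx, hxq, hx, hT.pair_mem (by omega) hq (by omega) fun c d hcd hf hs => ?_⟩
  have h1 := hT.not_separates h hf
  have h2 := hT.not_separates hx hf
  unfold Separates at *
  -- Only chords from `p` to a vertex beyond `x` remain; these contradict the choice of `x`.
  obtain rfl : c = p := by omega
  have := hmax d ⟨hcd, by omega, hf⟩
  omega

/-- The triangle adjacent to `{p, q}` on the side of the vertices outside the interval from `p`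
to `q`. Going from `q` through `n - 1` and `0` to `p`, the vertices below `p` come last, so the
farthest neighbour of `q` is sought there first. -/
theorem exists_outer_apex (hT : IsTriangulation n T) {p q : ℕ} (hpq : p < q) (hq : q < n)
    (hb : ¬ (p = 0 ∧ q + 1 = n)) (h : ({p, q} : Finset ℕ) ∈ T) :
    ∃ y, y < n ∧ (y < p ∨ q < y) ∧ ({p, y} : Finset ℕ) ∈ T ∧ ({q, y} : Finset ℕ) ∈ T := by
  by_cases hlow : ∃ y, y < p ∧ ({q, y} : Finset ℕ) ∈ T
  · obtain ⟨y, ⟨hyp, hy⟩, hmax⟩ := exists_max_of_lt (N := p) hlow (fun y hy => hy.1)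
    refine ⟨y, by omega, .inl hyp,
      hT.pair_mem (by omega) (by omega) (by omega) fun c d hcd hf hs => ?_, hy⟩
    have h1 := hT.not_separates h hf
    have h2 := hT.not_separates hy hf
    unfold Separates at *
    -- Only chords from `q` to a vertex strictly between `y` and `p` remain.
    obtain rfl : d = q := by omega
    have := hmax c ⟨by omega, by rwa [Finset.pair_comm]⟩
    omega
  · have hne : ∃ y, q < y ∧ y < n ∧ ({q, y} : Finset ℕ) ∈ T := by
      by_cases hq' : q + 1 < n
      · exact ⟨q + 1, by omega, hq', hT.succ_mem hq'⟩
      · -- For `q = n - 1`, the boundary edge `{n - 1, 0}` joins `q` to a vertex below `p`.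
        have h0 := hT.2.1 q hq
        have hqn : q + 1 = n := by omega
        rw [hqn, Nat.mod_self] at h0
        exact absurd ⟨0, by omega, h0⟩ hlow
    obtain ⟨y, ⟨hqy, hyn, hy⟩, hmax⟩ := exists_max_of_lt (N := n) hne (fun y hy => hy.2.1)
    refine ⟨y, hyn, .inr hqy,
      hT.pair_mem (by omega) (by omega) hyn fun c d hcd hf hs => ?_, hy⟩
    have h1 := hT.not_separates h hf
    have h2 := hT.not_separates hy hf
    have hdn : d < n := (hT.1 _ hf).2 d (by simp)
    unfold Separates at *
    -- Only chords at `q` remain, ending either beyond `y` or below `p`.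
    have hc : c = q ∨ d = q := by omega
    rcases hc with rfl | rfl
    · have := hmax d ⟨hcd, by omega, hf⟩
      omega
    · exact hlow ⟨c, by omega, by rwa [Finset.pair_comm]⟩

end Triangulation

/-! ### The flip -/

/-- For `n ≥ 4`, every diagonal `e` of a triangulation `T` of the `n`-gon can be flipped
in exactly one way: there is exactly one triangulation `T'` with `e ∉ T'` and
`T \ {e} ⊆ T'`. -/
theorem flip_existsUnique (n : ℕ) (hn : 4 ≤ n)
    (T : Finset (Finset ℕ)) (hT : IsTriangulation n T)
    (e : Finset ℕ) (he : IsDiagonal n e) (heT : e ∈ T) :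
    ∃! T' : Finset (Finset ℕ), IsTriangulation n T' ∧ e ∉ T' ∧ T.erase e ⊆ T' := by
  classical
  obtain ⟨p, q, hpq, hq, rfl⟩ := he.1.exists_lt
  have hpq' : p + 1 < q := by
    by_contra hcon
    refine he.2 ⟨p, by omega, ?_⟩
    rw [Nat.mod_eq_of_lt (by omega), show p + 1 = q by omega]
  have hout : ¬ (p = 0 ∧ q + 1 = n) := by
    rintro ⟨rfl, hqn⟩
    refine he.2 ⟨q, hq, ?_⟩
    rw [hqn, Nat.mod_self, Finset.pair_comm]
  obtain ⟨x, hpx, hxq, hx1, hx2⟩ := exists_inner_apex hT hpq' hq heT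
  obtain ⟨y, hyn, hy, hy1, hy2⟩ := exists_outer_apex hT hpq hq hout heT
  have hsep : Separates p q x y := by unfold Separates; omega
  have hne : ∀ a b, (a ≠ p ∧ a ≠ q) ∨ (b ≠ p ∧ b ≠ q) →
      ({a, b} : Finset ℕ) ≠ {p, q} := by
    intro a b hab h
    have := pair_eq_pair h
    omega
  have hs1 : ({p, x} : Finset ℕ) ∈ T.erase {p, q} :=
    Finset.mem_erase.2 ⟨hne _ _ (by omega), hx1⟩
  have hs2 : ({q, x} : Finset ℕ) ∈ T.erase {p, q} :=
    Finset.mem_erase.2 ⟨hne _ _ (by omega), hx2⟩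
  have hs3 : ({p, y} : Finset ℕ) ∈ T.erase {p, q} :=
    Finset.mem_erase.2 ⟨hne _ _ (by omega), hy1⟩
  have hs4 : ({q, y} : Finset ℕ) ∈ T.erase {p, q} :=
    Finset.mem_erase.2 ⟨hne _ _ (by omega), hy2⟩
  have hother : ∀ f, IsChord n f → Crosses {p, q} f →
      (∀ g ∈ T.erase {p, q}, ¬ Crosses g f) → f = {x, y} := by
    intro f hf hc hg
    obtain ⟨c, d, hcd, -, rfl⟩ := hf.exists_lt
    exact eq_of_separates hsep (crosses_pair.1 hc)
      (fun h => hg _ hs1 (crosses_pair.2 h)) (fun h => hg _ hs2 (crosses_pair.2 h))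
      (fun h => hg _ hs3 (crosses_pair.2 h)) (fun h => hg _ hs4 (crosses_pair.2 h))
  have hnew : ∀ f ∈ T.erase {p, q}, ¬ Crosses {x, y} f := by
    intro f hf hc
    obtain ⟨hfe, hfT⟩ := Finset.mem_erase.1 hf
    obtain ⟨c, d, hcd, -, rfl⟩ := (hT.1 f hfT).exists_lt
    refine hfe (eq_of_separates hsep.symm (crosses_pair.1 hc) ?_ ?_ ?_ ?_) <;>
      rw [← crosses_pair, Finset.pair_comm]
    exacts [hT.2.2.1 _ hx1 _ hfT, hT.2.2.1 _ hy1 _ hfT, hT.2.2.1 _ hx2 _ hfT,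
      hT.2.2.1 _ hy2 _ hfT]
  have hself : ∀ a b : ℕ, ¬ Crosses {a, b} {a, b} := by
    intro a b h
    have := crosses_pair.1 h
    unfold Separates at this
    omega
  have htri : IsTriangulation n (insert {x, y} (T.erase {p, q})) := by
    refine ⟨?_, ?_, ?_, ?_⟩
    · intro f hf
      rcases Finset.mem_insert.1 hf with rfl | hf
      · exact isChord_pair (by omega) (by omega) hyn
      · exact hT.1 f (Finset.mem_of_mem_erase hf)
    · intro i hi
      refine Finset.mem_insert_of_mem (Finset.mem_erase.2 ⟨fun h => ?_, hT.2.1 i hi⟩)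
      exact he.2 ⟨i, hi, h.symm⟩
    · intro f hf g hg hc
      rcases Finset.mem_insert.1 hf with rfl | hf <;> rcases Finset.mem_insert.1 hg with rfl | hg
      · exact hself _ _ hc
      · exact hnew _ hg hc
      · exact hnew _ hf hc.symm
      · exact hT.2.2.1 _ (Finset.mem_of_mem_erase hf) _ (Finset.mem_of_mem_erase hg) hc
    · intro g hg hgT
      by_contra! hcon
      have hcon' : ∀ f ∈ T.erase {p, q}, ¬ Crosses f g := fun f hf hc =>
        hcon f (Finset.mem_insert_of_mem hf) hc.symm
      by_cases hge : g = {p, q}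
      · subst hge
        exact hcon _ (Finset.mem_insert_self _ _) (crosses_pair.2 hsep)
      · have hgT' : g ∉ T := fun h =>
          hgT (Finset.mem_insert_of_mem (Finset.mem_erase.2 ⟨hge, h⟩))
        obtain ⟨f, hf, hc⟩ := hT.2.2.2 g hg hgT'
        by_cases hfe : f = {p, q}
        · subst hfe
          exact hgT (Finset.mem_insert.2 (.inl (hother g hg.1 hc.symm hcon')))
        · exact hcon' f (Finset.mem_erase.2 ⟨hfe, hf⟩) hc.symm
  refine ⟨insert {x, y} (T.erase {p, q}), ⟨htri, ?_, Finset.subset_insert _ _⟩, ?_⟩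
  · intro h
    rcases Finset.mem_insert.1 h with h | h
    · exact hne x y (by omega) h.symm
    · exact Finset.notMem_erase _ _ h
  · rintro T' ⟨hT', heT', hsub⟩
    -- A triangulation omitting `{p, q}` has a chord crossing it, here necessarily `{x, y}`.
    have hxy : ({x, y} : Finset ℕ) ∈ T' := by
      obtain ⟨f, hf, hc⟩ := hT'.2.2.2 _ he heT'
      rw [← hother f (hT'.1 f hf) hc fun g hg => hT'.2.2.1 g (hsub hg) f hf]
      exact hf
    -- A triangulation contained in another equals it, by maximality.
    have hle : insert {x, y} (T.erase {p, q}) ⊆ T' := Finset.insert_subset hxy hsub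
    exact Finset.Subset.antisymm (fun g hg => htri.mem_of_not_crosses (hT'.1 g hg)
      fun f hf => hT'.2.2.1 g hg f (hle hf)) hle
end
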